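/- arXiv:2511.19224 — 3 statements merged into one kernel-verified Lean document; each statement's English description precedes it below -/
import Mathlib

section
/- Let Ω ⊆ ℂ^q be open, let V be a finite-dimensional complex normed vector space and W a complex Banach space. Let j : Ω → (V →L[ℂ] W) be holomorphic (differentiable over ℂ) such that j(ν) is injective for every ν ∈ Ω, and let f : Ω → W be holomorphic such that f(ν) lies in the range of j(ν) for every ν ∈ Ω. Then the unique map a : Ω → V satisfying f(ν) = j(ν)(a(ν)) for all ν ∈ Ω is holomorphic on Ω. -/
/-!
Fix a point `x` and a continuous left inverse `L` of `j x`, which exists by Hahn-Banach since the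
range of `j x` is finite-dimensional. The endomorphism `L ∘ j ν` is the identity at `ν = x`, hence
invertible for `ν` near `x`, and `(L ∘ j ν)⁻¹ ∘ L` is a left inverse of `j ν` depending
differentiably on `ν`. Applied to `f ν` it gives `a ν`.
-/

open Function Topology

theorem hasLeftInverse_of_injective_of_finiteDimensional_domain {𝕜 V W : Type*} [RCLike 𝕜]
    [AddCommGroup V] [Module 𝕜 V] [TopologicalSpace V] [IsTopologicalAddGroup V]
    [ContinuousSMul 𝕜 V] [FiniteDimensional 𝕜 V]
    [AddCommGroup W] [Module 𝕜 W] [TopologicalSpace W] [PolynormableSpace 𝕜 W] [T2Space W]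
    {φ : V →L[𝕜] W} (hφ : Injective φ) :
    φ.HasLeftInverse := by
  have hW := PolynormableSpace.withSeminorms 𝕜 W
  have : IsTopologicalAddGroup W := hW.topologicalAddGroup
  have : ContinuousSMul 𝕜 W := hW.continuousSMul
  have : T2Space V := .of_injective_continuous hφ φ.continuous
  obtain ⟨g, hg⟩ := φ.toLinearMap.exists_leftInverse_of_injective (φ.ker_eq_bot_of_injective hφ)
  obtain ⟨L, hL⟩ :=
    (g.domRestrict φ.range).toContinuousLinearMap.exist_extension_of_finiteDimensional_range
  refine ⟨L, fun v => ?_⟩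
  calc
    L (φ v) = g (φ v) := congr($hL ⟨φ v, φ.mem_range_self v⟩).symm
    _ = v := congr($hg v)

section NontriviallyNormedField

variable {𝕜 E V W : Type*} [NontriviallyNormedField 𝕜]
  [NormedAddCommGroup E] [NormedSpace 𝕜 E]
  [NormedAddCommGroup V] [NormedSpace 𝕜 V] [CompleteSpace V]
  [NormedAddCommGroup W] [NormedSpace 𝕜 W]
  {s : Set E} {x : E} {j : E → V →L[𝕜] W}

theorem exists_differentiableWithinAt_leftInverse (hj : DifferentiableWithinAt 𝕜 j s x)
    (hjx : (j x).HasLeftInverse) :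
    ∃ g : E → W →L[𝕜] V, DifferentiableWithinAt 𝕜 g s x ∧
      ∀ᶠ ν in 𝓝[s] x, LeftInverse (g ν) (j ν) := by
  obtain ⟨L, hL⟩ := hjx
  have hT : DifferentiableWithinAt 𝕜 (fun ν => L.comp (j ν)) s x :=
    (differentiableWithinAt_const L).clm_comp hj
  have hTx : IsUnit (L.comp (j x)) := by
    rw [show L.comp (j x) = 1 from ContinuousLinearMap.ext hL]
    exact isUnit_one
  have hT_unit : ∀ᶠ ν in 𝓝[s] x, IsUnit (L.comp (j ν)) :=
    hT.continuousWithinAt.eventually (Units.isOpen.mem_nhds hTx)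
  refine ⟨fun ν => (Ring.inverse (L.comp (j ν))).comp L,
    (hT.inverse hTx).clm_comp (differentiableWithinAt_const L), ?_⟩
  filter_upwards [hT_unit] with ν hν v
  exact congr($(Ring.inverse_mul_cancel _ hν) v)

theorem differentiableWithinAt_of_eq_clm_apply_of_hasLeftInverse {f : E → W} {a : E → V}
    (hj : DifferentiableWithinAt 𝕜 j s x) (hjx : (j x).HasLeftInverse)
    (hf : DifferentiableWithinAt 𝕜 f s x) (ha : ∀ ν ∈ s, f ν = j ν (a ν)) (hx : x ∈ s) :
    DifferentiableWithinAt 𝕜 a s x := by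
  obtain ⟨g, hg, hgj⟩ := exists_differentiableWithinAt_leftInverse hj hjx
  have ha_eq : a =ᶠ[𝓝[s] x] fun ν => g ν (f ν) := by
    filter_upwards [hgj, self_mem_nhdsWithin] with ν hν hνs
    rw [ha ν hνs, hν]
  exact (hg.clm_apply hf).congr_of_eventuallyEq_of_mem ha_eq hx

end NontriviallyNormedField

theorem holomorphic_of_eq_apply_injective_family_general {𝕜 E V W : Type*} [RCLike 𝕜]
    [NormedAddCommGroup E] [NormedSpace 𝕜 E]
    [NormedAddCommGroup V] [NormedSpace 𝕜 V] [FiniteDimensional 𝕜 V]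
    [NormedAddCommGroup W] [NormedSpace 𝕜 W]
    {s : Set E} {j : E → V →L[𝕜] W} (hj : DifferentiableOn 𝕜 j s)
    (hinj : ∀ ν ∈ s, Injective (j ν)) {f : E → W} (hf : DifferentiableOn 𝕜 f s)
    {a : E → V} (ha : ∀ ν ∈ s, f ν = j ν (a ν)) :
    DifferentiableOn 𝕜 a s := fun x hx =>
  have : CompleteSpace V := FiniteDimensional.complete 𝕜 V
  differentiableWithinAt_of_eq_clm_apply_of_hasLeftInverse (hj x hx)
    (hasLeftInverse_of_injective_of_finiteDimensional_domain (hinj x hx)) (hf x hx) ha hx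

/-- If `j : Ω → Hom(V, W)` is a holomorphic family of injective continuous linear maps,
`f : Ω → W` is holomorphic with `f ν ∈ range (j ν)` for every `ν ∈ Ω`, then the (unique)
coefficient map `a : Ω → V` with `f ν = j ν (a ν)` is holomorphic on `Ω`. -/
theorem holomorphic_of_eq_apply_injective_family {q : ℕ}
    {V W : Type*} [NormedAddCommGroup V] [NormedSpace ℂ V] [FiniteDimensional ℂ V]
    [NormedAddCommGroup W] [NormedSpace ℂ W] [CompleteSpace W]
    (Ω : Set (Fin q → ℂ)) (hΩ : IsOpen Ω)
    (j : (Fin q → ℂ) → (V →L[ℂ] W)) (hj : DifferentiableOn ℂ j Ω)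
    (hinj : ∀ ν ∈ Ω, Function.Injective (j ν))
    (f : (Fin q → ℂ) → W) (hf : DifferentiableOn ℂ f Ω)
    (hrange : ∀ ν ∈ Ω, f ν ∈ Set.range (j ν))
    (a : (Fin q → ℂ) → V) (ha : ∀ ν ∈ Ω, f ν = j ν (a ν)) :
    DifferentiableOn ℂ a Ω :=
  holomorphic_of_eq_apply_injective_family_general hj hinj hf ha
end

section
/- Let n ≥ 1, let E be a complex Banach space, ε > 0, and T_ε = {ν ∈ ℂⁿ : ‖Re ν‖ < ε}. Let α ∈ ℝⁿ, α ≠ 0, c ∈ ℝ, and define ℓ : ℂⁿ → ℂ by ℓ(ν) = ∑_{j=1}^n α_j ν_j − i c. Let Γ : T_ε → E be holomorphic with Γ(ν) = 0 for every ν ∈ T_ε with ℓ(ν) = 0. Then there exists a holomorphic map Γ̃ : T_ε → E with Γ(ν) = ℓ(ν) Γ̃(ν) for all ν ∈ T_ε. Moreover, if there are C, N > 0 with ‖Γ(ν)‖ ≤ C (1 + ‖ν‖)^N for all ν ∈ T_ε, then there exists C' > 0 with ‖Γ̃(ν)‖ ≤ C' (1 + ‖ν‖)^N for all ν with ‖Re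 ν‖ < ε/2. -/
/-- The coordinatewise real part of `ν ∈ ℂⁿ`, as a point of Euclidean `ℝⁿ`. -/
noncomputable def rePart {n : ℕ} (ν : EuclideanSpace ℂ (Fin n)) :
    EuclideanSpace ℝ (Fin n) :=
  (EuclideanSpace.equiv (Fin n) ℝ).symm fun j => (ν j).re

/-- The tube domain `T_ε = {ν ∈ ℂⁿ : ‖Re ν‖ < ε}`. -/
def tubeDomain (n : ℕ) (ε : ℝ) : Set (EuclideanSpace ℂ (Fin n)) :=
  {ν | ‖rePart ν‖ < ε}

/-!
Fix `v` with `L v = 1`. Off the hyperplane `L = k` the quotient `Γ / (L - k)` is holomorphic, and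
on every complex line in the direction `v` its singularity is removable, the extended value being
the derivative of `Γ` along `v`. By the mean value property the extended quotient near a point of
the hyperplane is the average of its values on translates of a small circle in the direction `v`.
That circle avoids the hyperplane, so differentiation under the integral sign gives joint
holomorphy. For the growth, consider a disc of fixed radius `r` in the direction `v`: either
`|L - k| ≥ r / 2` at its center, or `|L - k| ≥ r / 2` on its boundary circle, and then the maximum
principle carries the bound to the center.
-/

open Set Filter Topology Metric MeasureTheory Real

section HolomorphicMaps

variable {X E : Type*} [NormedAddCommGroup X] [NormedSpace ℂ X]
  [NormedAddCommGroup E] [NormedSpace ℂ E] {f : X → E} {U : Set X} {x y : X} {R M : ℝ}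

theorem norm_fderiv_le_of_forall_mem_ball_norm_le (hR : 0 < R)
    (hf : DifferentiableOn ℂ f (ball x R)) (hM : ∀ y ∈ ball x R, ‖f y‖ ≤ M) :
    ‖fderiv ℂ f x‖ ≤ 2 * M / R := by
  refine Complex.norm_fderiv_le_div_of_mapsTo_ball hf (fun y hy => ?_) hR
  rw [mem_closedBall, dist_eq_norm]
  linarith [norm_sub_le (f y) (f x), hM y hy, hM x (mem_ball_self hR)]

theorem exists_lipschitzOnWith_ball_of_differentiableOn (hU : IsOpen U)
    (hf : DifferentiableOn ℂ f U) (hx : x ∈ U) :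
    ∃ ρ > 0, ∃ K, ball x ρ ⊆ U ∧ LipschitzOnWith K f (ball x ρ) := by
  have hfx : ContinuousAt f x := (hf.differentiableAt (hU.mem_nhds hx)).continuousAt
  have hbound : ∀ᶠ y in 𝓝 x, ‖f y‖ < ‖f x‖ + 1 :=
    hfx.norm.eventually (gt_mem_nhds (lt_add_one _))
  obtain ⟨R, hR, hball⟩ := Metric.eventually_nhds_iff_ball.1 (hbound.and (hU.mem_nhds hx))
  have hsub : ball x (R / 2) ⊆ ball x R := ball_subset_ball (by linarith)
  have hfderiv : ∀ y ∈ ball x (R / 2), ‖fderiv ℂ f y‖ ≤ 2 * (‖f x‖ + 1) / (R / 2) := by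
    intro y hy
    have hyR : ball y (R / 2) ⊆ ball x R := ball_subset_ball' (by linarith [mem_ball.1 hy])
    exact norm_fderiv_le_of_forall_mem_ball_norm_le (half_pos hR)
      (hf.mono fun z hz => (hball z (hyR hz)).2) fun z hz => (hball z (hyR hz)).1.le
  refine ⟨R / 2, half_pos hR, (2 * (‖f x‖ + 1) / (R / 2)).toNNReal,
    fun y hy => (hball y (hsub hy)).2, ?_⟩
  refine (convex_ball x (R / 2)).lipschitzOnWith_of_nnnorm_fderiv_le (𝕜 := ℂ)
    (fun y hy => hf.differentiableAt (hU.mem_nhds (hball y (hsub hy)).2)) fun y hy => ?_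
  exact NNReal.le_toNNReal_of_coe_le (hfderiv y hy)

theorem norm_fderiv_sub_le_of_lipschitzOnWith {K : NNReal} (hR : 0 < R)
    (hf : DifferentiableOn ℂ f (ball x R)) (hK : LipschitzOnWith K f (ball x R))
    (hy : y ∈ ball x (R / 2)) :
    ‖fderiv ℂ f y - fderiv ℂ f x‖ ≤ 4 * K / R * ‖y - x‖ := by
  have hmem : ∀ z ∈ ball x (R / 2), z ∈ ball x R ∧ z + (y - x) ∈ ball x R := by
    intro z hz
    rw [mem_ball, dist_eq_norm] at hy hz
    simp only [mem_ball, dist_eq_norm]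
    refine ⟨by linarith, ?_⟩
    rw [add_sub_right_comm]
    linarith [norm_add_le (z - x) (y - x)]
  have hdiff : ∀ z ∈ ball x R, HasFDerivAt f (fderiv ℂ f z) z := fun z hz =>
    (hf.differentiableAt (isOpen_ball.mem_nhds hz)).hasFDerivAt
  -- Cauchy's estimate for the increment of `f`, which the Lipschitz bound makes small.
  have hincr : ∀ z ∈ ball x (R / 2), HasFDerivAt (fun z => f (z + (y - x)) - f z)
      (fderiv ℂ f (z + (y - x)) - fderiv ℂ f z) z := fun z hz =>
    ((hasFDerivAt_comp_add_right (y - x)).2 (hdiff _ (hmem z hz).2)).sub (hdiff z (hmem z hz).1)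
  have hcauchy := norm_fderiv_le_of_forall_mem_ball_norm_le (M := K * ‖y - x‖) (half_pos hR)
    (fun z hz => (hincr z hz).differentiableAt.differentiableWithinAt) fun z hz => by
      simpa using hK.norm_sub_le (hmem z hz).2 (hmem z hz).1
  rw [(hincr x (mem_ball_self (half_pos hR))).fderiv, add_sub_cancel] at hcauchy
  exact hcauchy.trans_eq (by ring)

theorem continuousOn_fderiv_of_differentiableOn (hU : IsOpen U) (hf : DifferentiableOn ℂ f U) :
    ContinuousOn (fderiv ℂ f) U := by
  intro x hx
  obtain ⟨ρ, hρ, K, hρU, hK⟩ := exists_lipschitzOnWith_ball_of_differentiableOn hU hf hx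
  refine (continuousAt_of_locally_lipschitz (half_pos hρ) (4 * K / ρ)
    fun y hy => ?_).continuousWithinAt
  simpa only [dist_eq_norm] using
    norm_fderiv_sub_le_of_lipschitzOnWith hρ (hf.mono hρU) hK (mem_ball.2 hy)

theorem differentiableAt_intervalIntegral_comp_add {γ : ℝ → X} {a b : ℝ} (hU : IsOpen U)
    (hf : DifferentiableOn ℂ f U) (hγ : ContinuousOn γ (uIcc a b))
    (hmem : ∀ t ∈ uIcc a b, x + γ t ∈ U) :
    DifferentiableAt ℂ (fun y => ∫ t in a..b, f (y + γ t)) x := by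
  have hf' := continuousOn_fderiv_of_differentiableOn hU hf
  have hpath : ∀ y, ContinuousOn (fun t => y + γ t) (uIcc a b) := fun y => hγ.const_add y
  have hcompact : IsCompact ((fun t => x + γ t) '' uIcc a b) :=
    isCompact_uIcc.image_of_continuousOn (hpath x)
  have hsubset : (fun t => x + γ t) '' uIcc a b ⊆ U := image_subset_iff.2 hmem
  obtain ⟨V, hKV, hV, hbdd⟩ :=
    exists_isOpen_isBounded_image_of_isCompact_of_continuousOn hcompact hU hsubset hf'
  obtain ⟨B, hB⟩ := hbdd.exists_norm_le
  obtain ⟨δ, hδ, hthick⟩ := hcompact.exists_thickening_subset_open (hU.inter hV)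
    (subset_inter hsubset hKV)
  have hnear : ∀ y ∈ ball x δ, ∀ t ∈ uIcc a b, y + γ t ∈ U ∩ V := fun y hy t ht =>
    hthick (mem_thickening_iff.2 ⟨_, mem_image_of_mem _ ht, by simpa using hy⟩)
  have hcont : ∀ y ∈ ball x δ, ContinuousOn (fun t => f (y + γ t)) (uIcc a b) := fun y hy =>
    hf.continuousOn.comp (hpath y) fun t ht => (hnear y hy t ht).1
  have hcont' : ContinuousOn (fun t => fderiv ℂ f (x + γ t)) (uIcc a b) :=
    hf'.comp (hpath x) hmem
  refine (intervalIntegral.hasFDerivAt_integral_of_dominated_of_fderiv_le (𝕜 := ℂ)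
    (F' := fun y t => fderiv ℂ f (y + γ t)) (bound := fun _ => B) (ball_mem_nhds x hδ)
    ?_ (hcont x (mem_ball_self hδ)).intervalIntegrable
    ((hcont'.mono uIoc_subset_uIcc).aestronglyMeasurable measurableSet_uIoc)
    ?_ intervalIntegrable_const ?_).differentiableAt
  · filter_upwards [ball_mem_nhds x hδ] with y hy
    exact ((hcont y hy).mono uIoc_subset_uIcc).aestronglyMeasurable measurableSet_uIoc
  · exact .of_forall fun t ht y hy =>
      hB _ (mem_image_of_mem _ (hnear y hy t (uIoc_subset_uIcc ht)).2)
  · exact .of_forall fun t ht y hy => (hasFDerivAt_comp_add_right _).2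
      (hf.differentiableAt (hU.mem_nhds (hnear y hy t (uIoc_subset_uIcc ht)).1)).hasFDerivAt

theorem differentiableAt_circleAverage_add_smul {v : X} {r : ℝ} (hU : IsOpen U)
    (hf : DifferentiableOn ℂ f U) (hmem : ∀ z ∈ sphere (0 : ℂ) |r|, x + z • v ∈ U) :
    DifferentiableAt ℂ (fun y => circleAverage (fun z : ℂ => f (y + z • v)) 0 r) x :=
  (differentiableAt_intervalIntegral_comp_add hU hf (γ := fun θ => circleMap 0 r θ • v)
    ((continuous_circleMap 0 r).smul continuous_const).continuousOn
    fun θ _ => hmem _ (circleMap_mem_sphere' 0 r θ)).const_smul ((2 * π)⁻¹)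

end HolomorphicMaps

section Estimates

variable {X E : Type*} [NormedAddCommGroup E] [NormedSpace ℂ E]

theorem norm_le_of_forall_norm_sub_smul_le {h : ℂ → E} {a c : ℂ} {r M : ℝ} (hr : 0 < r)
    (hh : DiffContOnCl ℂ h (ball c r)) (hM : ∀ z ∈ closedBall c r, ‖(z - a) • h z‖ ≤ M) :
    ‖h c‖ ≤ 2 / r * M := by
  have hfar : ∀ z ∈ closedBall c r, r / 2 ≤ ‖z - a‖ → ‖h z‖ ≤ 2 / r * M := by
    intro z hz hza
    calc ‖h z‖ = 2 / r * (r / 2 * ‖h z‖) := by field_simp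
      _ ≤ 2 / r * (‖z - a‖ * ‖h z‖) := by gcongr
      _ ≤ 2 / r * M := by gcongr; exact (norm_smul _ _).symm.trans_le (hM z hz)
  obtain hca | hca := le_or_gt (r / 2) ‖c - a‖
  · exact hfar c (mem_closedBall_self hr.le) hca
  refine Complex.norm_le_of_forall_mem_frontier_norm_le isBounded_ball hh (fun z hz => ?_)
    (subset_closure (mem_ball_self hr))
  rw [frontier_ball c hr.ne'] at hz
  refine hfar z (sphere_subset_closedBall hz) ?_
  have htriangle : ‖z - c‖ ≤ ‖z - a‖ + ‖c - a‖ := by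
    simpa only [sub_sub_sub_cancel_right] using norm_sub_le (z - a) (c - a)
  rw [mem_sphere_iff_norm.1 hz] at htriangle
  linarith

theorem norm_le_of_forall_norm_apply_sub_smul_le [NormedAddCommGroup X] [NormedSpace ℂ X]
    {h : X → E} {L : X →L[ℂ] ℂ} {k : ℂ} {v ν : X} {δ M : ℝ} (hv : L v = 1) (hδ : 0 < δ)
    (hh : DifferentiableOn ℂ h (ball ν δ)) (hM : ∀ μ ∈ ball ν δ, ‖(L μ - k) • h μ‖ ≤ M) :
    ‖h ν‖ ≤ 4 * ‖v‖ / δ * M := by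
  have hv₀ : 0 < ‖v‖ := norm_pos_iff.2 fun h₀ => by simp [h₀] at hv
  have hr : 0 < δ / (2 * ‖v‖) := by positivity
  have hmem : ∀ z ∈ closedBall (0 : ℂ) (δ / (2 * ‖v‖)), ν + z • v ∈ ball ν δ := by
    intro z hz
    rw [mem_closedBall_zero_iff] at hz
    rw [mem_ball, dist_self_add_left, norm_smul]
    calc ‖z‖ * ‖v‖ ≤ δ / (2 * ‖v‖) * ‖v‖ := by gcongr
      _ = δ / 2 := by field_simp
      _ < δ := half_lt_self hδ
  have hline : DifferentiableOn ℂ (fun z : ℂ => h (ν + z • v)) (closedBall 0 (δ / (2 * ‖v‖))) :=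
    hh.comp (by fun_prop) hmem
  have hbound := norm_le_of_forall_norm_sub_smul_le (a := k - L ν) hr
    (hline.diffContOnCl_ball subset_rfl) fun z hz => by
      have hfactor : L (ν + z • v) - k = z - (k - L ν) := by
        simp only [map_add, map_smul, hv, smul_eq_mul]
        ring
      simpa only [hfactor] using hM _ (hmem z hz)
  calc ‖h ν‖ ≤ 2 / (δ / (2 * ‖v‖)) * M := by simpa using hbound
    _ = 4 * ‖v‖ / δ * M := by field_simp; ring

theorem one_add_norm_add_rpow_le [SeminormedAddCommGroup X] (x y : X) (N : ℝ) :
    (1 + ‖x + y‖) ^ N ≤ (1 + ‖y‖) ^ |N| * (1 + ‖x‖) ^ N := by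
  have hmul : ∀ a b : X, 1 + ‖a + b‖ ≤ (1 + ‖b‖) * (1 + ‖a‖) := fun a b => by
    nlinarith [norm_add_le a b, norm_nonneg a, norm_nonneg b]
  obtain hN | hN := le_total 0 N
  · rw [abs_of_nonneg hN, ← mul_rpow (by positivity) (by positivity)]
    exact rpow_le_rpow (by positivity) (hmul x y) hN
  · have hx : 1 + ‖x‖ ≤ (1 + ‖y‖) * (1 + ‖x + y‖) := by simpa using hmul (x + y) (-y)
    have hpow := rpow_le_rpow_of_nonpos (by positivity) hx hN
    rw [mul_rpow (by positivity) (by positivity)] at hpow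
    rw [abs_of_nonpos hN, rpow_neg (by positivity)]
    exact (le_inv_mul_iff₀ (by positivity)).2 hpow

end Estimates

/-- The quotient `Γ / (L - k)`, extended to the hyperplane `L = k` by the derivative of `Γ` in the
direction `v`. When `L v = 1` and `Γ` vanishes on the hyperplane, these values remove the
singularity. -/
noncomputable def affineQuotient {X E : Type*} [NormedAddCommGroup X] [NormedSpace ℂ X]
    [NormedAddCommGroup E] [NormedSpace ℂ E] (Γ : X → E) (L : X →L[ℂ] ℂ) (k : ℂ) (v ν : X) : E :=
  if L ν = k then lineDeriv ℂ Γ ν v else (L ν - k)⁻¹ • Γ ν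

section AffineQuotient

variable {X E : Type*} [NormedAddCommGroup X] [NormedSpace ℂ X]
  [NormedAddCommGroup E] [NormedSpace ℂ E] {Γ : X → E} {L : X →L[ℂ] ℂ} {k : ℂ} {v ν : X} {T : Set X}

theorem sub_smul_affineQuotient (h₀ : L ν = k → Γ ν = 0) :
    (L ν - k) • affineQuotient Γ L k v ν = Γ ν := by
  by_cases hν : L ν = k
  · rw [h₀ hν, hν, sub_self, zero_smul]
  · rw [affineQuotient, if_neg hν, smul_inv_smul₀ (sub_ne_zero.2 hν)]

theorem differentiableOn_affineQuotient_of_ne (hΓ : DifferentiableOn ℂ Γ T) :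
    DifferentiableOn ℂ (affineQuotient Γ L k v) (T ∩ {ν | L ν ≠ k}) := by
  have hquot : DifferentiableOn ℂ (fun ν => (L ν - k)⁻¹ • Γ ν) (T ∩ {ν | L ν ≠ k}) :=
    (DifferentiableOn.inv (by fun_prop) fun ν hν => sub_ne_zero.2 hν.2).smul
      (hΓ.mono inter_subset_left)
  exact hquot.congr fun ν hν => if_neg hν.2

theorem affineQuotient_add_smul_eq_dslope (hv : L v = 1) (h₀ : Γ (ν + (k - L ν) • v) = 0) (z : ℂ) :
    affineQuotient Γ L k v (ν + z • v) = dslope (fun w : ℂ => Γ (ν + w • v)) (k - L ν) z := by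
  have hL : L (ν + z • v) = L ν + z := by simp [hv]
  by_cases hz : z = k - L ν
  · have hshift : (fun w : ℂ => Γ (ν + z • v + w • v)) = fun w => Γ (ν + (z + w) • v) := by
      simp only [add_smul, add_assoc]
    rw [affineQuotient, if_pos (by rw [hL, hz, add_sub_cancel]), ← hz, dslope_same, lineDeriv,
      hshift, deriv_comp_const_add (fun w : ℂ => Γ (ν + w • v)), add_zero]
  · have hne : L (ν + z • v) ≠ k := fun h => hz (eq_sub_of_add_eq' (hL.symm.trans h))
    rw [affineQuotient, if_neg hne, dslope_of_ne _ hz, slope_def_module, h₀, sub_zero, hL]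
    congr 2
    ring

variable [CompleteSpace E]

theorem circleAverage_affineQuotient (hv : L v = 1) (hT : IsOpen T) (hΓ : DifferentiableOn ℂ Γ T)
    (h₀ : ∀ μ ∈ T, L μ = k → Γ μ = 0) {r : ℝ}
    (hdisc : ∀ z ∈ closedBall (0 : ℂ) |r|, ν + z • v ∈ T) (hzero : ν + (k - L ν) • v ∈ T) :
    circleAverage (fun z => affineQuotient Γ L k v (ν + z • v)) 0 r =
      affineQuotient Γ L k v ν := by
  have hS : IsOpen {z : ℂ | ν + z • v ∈ T} := hT.preimage (by fun_prop)
  have hline : DifferentiableOn ℂ (fun z : ℂ => Γ (ν + z • v)) {z : ℂ | ν + z • v ∈ T} :=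
    hΓ.comp (by fun_prop) fun _ hz => hz
  have hdslope : DifferentiableOn ℂ (fun z => affineQuotient Γ L k v (ν + z • v))
      {z : ℂ | ν + z • v ∈ T} :=
    ((Complex.differentiableOn_dslope (hS.mem_nhds hzero)).2 hline).congr fun z _ =>
      affineQuotient_add_smul_eq_dslope hv (h₀ _ hzero (by simp [hv])) z
  simpa using (hdslope.diffContOnCl_ball hdisc).circleAverage

theorem differentiableOn_affineQuotient (hv : L v = 1) (hT : IsOpen T)
    (hΓ : DifferentiableOn ℂ Γ T) (h₀ : ∀ ν ∈ T, L ν = k → Γ ν = 0) :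
    DifferentiableOn ℂ (affineQuotient Γ L k v) T := by
  have hoff := differentiableOn_affineQuotient_of_ne (L := L) (k := k) (v := v) hΓ
  have hU : IsOpen (T ∩ {ν | L ν ≠ k}) := hT.inter (isOpen_ne_fun L.continuous continuous_const)
  refine fun ν hν => DifferentiableAt.differentiableWithinAt ?_
  by_cases hk : L ν = k
  swap
  · exact hoff.differentiableAt (hU.mem_nhds ⟨hν, hk⟩)
  have hT' : ∀ᶠ p : X × ℂ in 𝓝 ν ×ˢ 𝓝 0, p.1 + p.2 • v ∈ T := by
    rw [← nhds_prod_eq]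
    exact (hT.preimage (by fun_prop : Continuous fun p : X × ℂ => p.1 + p.2 • v)).mem_nhds
      (by simpa using hν)
  obtain ⟨P, hP, Q, hQ, hPQ⟩ := eventually_prod_iff.1 hT'
  obtain ⟨r, hr, hrQ⟩ := nhds_basis_closedBall.eventually_iff.1 hQ
  have hzero : ∀ᶠ μ in 𝓝 ν, μ + (k - L μ) • v ∈ T :=
    (hT.preimage (by fun_prop : Continuous fun μ => μ + (k - L μ) • v)).mem_nhds
      (by simpa [hk] using hν)
  have hcircle : ∀ z ∈ sphere (0 : ℂ) |r|, ν + z • v ∈ T ∩ {ν | L ν ≠ k} := by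
    rw [abs_of_pos hr]
    refine fun z hz => ⟨hPQ hP.self_of_nhds (hrQ (sphere_subset_closedBall hz)), ?_⟩
    simpa [hv, hk] using ne_of_mem_sphere hz hr.ne'
  refine (differentiableAt_circleAverage_add_smul hU hoff hcircle).congr_of_eventuallyEq ?_
  filter_upwards [hP, hzero] with μ hμ hμ₀
  refine (circleAverage_affineQuotient hv hT hΓ h₀ (fun z hz => hPQ hμ (hrQ ?_)) hμ₀).symm
  rwa [abs_of_pos hr] at hz

theorem div_linear_factor_on_tube_general (hT : IsOpen T) (hL : L ≠ 0)
    (hΓ : DifferentiableOn ℂ Γ T) (h₀ : ∀ ν ∈ T, L ν - k = 0 → Γ ν = 0) :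
    ∃ Γt : X → E, DifferentiableOn ℂ Γt T ∧ (∀ ν ∈ T, Γ ν = (L ν - k) • Γt ν) ∧
      ∀ δ C N : ℝ, 0 < δ → 0 < C → (∀ ν ∈ T, ‖Γ ν‖ ≤ C * (1 + ‖ν‖) ^ N) →
        ∃ C' > 0, ∀ ν, ball ν δ ⊆ T → ‖Γt ν‖ ≤ C' * (1 + ‖ν‖) ^ N := by
  obtain ⟨v, hv⟩ : ∃ v, L v = 1 := L.toLinearMap.surjective (by exact_mod_cast hL) 1
  have hv₀ : 0 < ‖v‖ := norm_pos_iff.2 fun h => by simp [h] at hv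
  simp only [sub_eq_zero] at h₀
  have hdiff := differentiableOn_affineQuotient hv hT hΓ h₀
  have hdiv : ∀ ν ∈ T, (L ν - k) • affineQuotient Γ L k v ν = Γ ν := fun ν hν =>
    sub_smul_affineQuotient (h₀ ν hν)
  refine ⟨affineQuotient Γ L k v, hdiff, fun ν hν => (hdiv ν hν).symm, fun δ C N hδ hC hgrowth =>
    ⟨4 * ‖v‖ / δ * (C * (1 + δ) ^ |N|), by positivity, fun ν hball => ?_⟩⟩
  have hbound : ∀ μ ∈ ball ν δ,
      ‖(L μ - k) • affineQuotient Γ L k v μ‖ ≤ C * (1 + δ) ^ |N| * (1 + ‖ν‖) ^ N := by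
    intro μ hμ
    rw [hdiv μ (hball hμ)]
    calc ‖Γ μ‖ ≤ C * (1 + ‖ν + (μ - ν)‖) ^ N := by simpa using hgrowth μ (hball hμ)
      _ ≤ C * ((1 + ‖μ - ν‖) ^ |N| * (1 + ‖ν‖) ^ N) := by
        gcongr; exact one_add_norm_add_rpow_le _ _ _
      _ ≤ C * ((1 + δ) ^ |N| * (1 + ‖ν‖) ^ N) := by gcongr; exact (mem_ball_iff_norm.1 hμ).le
      _ = C * (1 + δ) ^ |N| * (1 + ‖ν‖) ^ N := by ring
  rw [mul_assoc]
  exact norm_le_of_forall_norm_apply_sub_smul_le hv hδ (hdiff.mono hball) hbound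

end AffineQuotient

section Tube

variable {n : ℕ}

theorem rePart_add (ν μ : EuclideanSpace ℂ (Fin n)) : rePart (ν + μ) = rePart ν + rePart μ := by
  ext j
  simp [rePart]

theorem norm_rePart_le (ν : EuclideanSpace ℂ (Fin n)) : ‖rePart ν‖ ≤ ‖ν‖ := by
  rw [EuclideanSpace.norm_eq, EuclideanSpace.norm_eq]
  gcongr with j
  exact Complex.abs_re_le_norm (ν j)

theorem ball_subset_tubeDomain {ν : EuclideanSpace ℂ (Fin n)} {δ ε : ℝ}
    (h : ‖rePart ν‖ + δ ≤ ε) : ball ν δ ⊆ tubeDomain n ε := by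
  intro μ hμ
  calc ‖rePart μ‖ = ‖rePart ν + rePart (μ - ν)‖ := by rw [← rePart_add, add_sub_cancel]
    _ ≤ ‖rePart ν‖ + ‖μ - ν‖ := norm_add_le_of_le le_rfl (norm_rePart_le _)
    _ < ‖rePart ν‖ + δ := by gcongr; exact mem_ball_iff_norm.1 hμ
    _ ≤ ε := h

theorem isOpen_tubeDomain (n : ℕ) (ε : ℝ) : IsOpen (tubeDomain n ε) :=
  Metric.isOpen_iff.2 fun ν hν => ⟨ε - ‖rePart ν‖, sub_pos.2 hν,
    ball_subset_tubeDomain (add_sub_cancel _ _).le⟩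

theorem innerSL_toLp_ofReal_apply {ι : Type*} [Fintype ι] (α : ι → ℝ) (ν : EuclideanSpace ℂ ι) :
    innerSL ℂ (WithLp.toLp 2 fun j => (α j : ℂ)) ν = ∑ j, (α j : ℂ) * ν j := by
  simp [PiLp.inner_apply, mul_comm]

theorem innerSL_toLp_ofReal_ne_zero {ι : Type*} [Fintype ι] {α : ι → ℝ} (hα : α ≠ 0) :
    innerSL ℂ (WithLp.toLp 2 fun j => (α j : ℂ)) ≠ 0 := by
  obtain ⟨j, hj⟩ := Function.ne_iff.1 hα
  rw [← norm_ne_zero_iff, innerSL_apply_norm, norm_ne_zero_iff]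
  exact fun h => hj (by simpa using congrArg (fun ν : EuclideanSpace ℂ ι => ν j) h)

end Tube

/-- Division of a holomorphic function on a tube domain by the affine linear factor
`ℓ(ν) = ∑ⱼ αⱼ νⱼ − i c` on whose zero set it vanishes, with preservation of
polynomial growth on the half-size tube. -/
theorem div_linear_factor_on_tube {n : ℕ} (hn : 1 ≤ n)
    {E : Type*} [NormedAddCommGroup E] [NormedSpace ℂ E] [CompleteSpace E]
    (ε : ℝ) (hε : 0 < ε) (α : Fin n → ℝ) (hα : α ≠ 0) (c : ℝ)
    (Γ : EuclideanSpace ℂ (Fin n) → E)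
    (hΓ : DifferentiableOn ℂ Γ (tubeDomain n ε))
    (hvanish : ∀ ν ∈ tubeDomain n ε,
      (∑ j, (α j : ℂ) * ν j) - Complex.I * (c : ℂ) = 0 → Γ ν = 0) :
    ∃ Γt : EuclideanSpace ℂ (Fin n) → E,
      DifferentiableOn ℂ Γt (tubeDomain n ε) ∧
      (∀ ν ∈ tubeDomain n ε,
        Γ ν = ((∑ j, (α j : ℂ) * ν j) - Complex.I * (c : ℂ)) • Γt ν) ∧
      ∀ C N : ℝ, 0 < C → 0 < N →
        (∀ ν ∈ tubeDomain n ε, ‖Γ ν‖ ≤ C * (1 + ‖ν‖) ^ N) →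
        ∃ C' > 0, ∀ ν : EuclideanSpace ℂ (Fin n), ‖rePart ν‖ < ε / 2 →
          ‖Γt ν‖ ≤ C' * (1 + ‖ν‖) ^ N := by
  simp only [← innerSL_toLp_ofReal_apply] at hvanish ⊢
  obtain ⟨Γt, hdiff, hdiv, hgrowth⟩ := div_linear_factor_on_tube_general
    (isOpen_tubeDomain n ε) (innerSL_toLp_ofReal_ne_zero hα) hΓ hvanish
  refine ⟨Γt, hdiff, hdiv, fun C N hC _ hΓC => ?_⟩
  obtain ⟨C', hC', hbound⟩ := hgrowth (ε / 2) C N (half_pos hε) hC hΓC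
  exact ⟨C', hC', fun ν hν => hbound ν (ball_subset_tubeDomain (by linarith))⟩
end

section
/- Let n ≥ 1 and let C ⊆ ℝⁿ be a compact convex polyhedral set with nonempty interior. Then: (i) C has only finitely many hyperplane facets; (ii) the topological boundary ∂C equals the union, over all hyperplane facets σ of C, of the closed facets C ∩ σ; (iii) if σ₁ and σ₂ are distinct hyperplane facets of C, then the interior of C ∩ σ₁ relative to σ₁ and the interior of C ∩ σ₂ relative to σ₂ are disjoint. -/
open MeasureTheory
open scoped InnerProductSpace

/-- A polyhedral set: a finite intersection of closed half-spaces. -/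
def IsPolyhedral {n : ℕ} (C : Set (EuclideanSpace ℝ (Fin n))) : Prop :=
  ∃ S : Finset (EuclideanSpace ℝ (Fin n) × ℝ),
    (∀ p ∈ S, p.1 ≠ 0) ∧ C = ⋂ p ∈ S, {x | ⟪p.1, x⟫_ℝ ≤ p.2}

/-- The affine hyperplane with normal vector `p.1` and offset `p.2`. -/
def hyperplaneOf {n : ℕ} (p : EuclideanSpace ℝ (Fin n) × ℝ) :
    Set (EuclideanSpace ℝ (Fin n)) :=
  {x | ⟪p.1, x⟫_ℝ = p.2}

/-- `p = (ν, c)` describes a hyperplane facet of `C` with outward unit normal `ν`: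
`ν` is a unit vector, `C` is contained in the half-space `⟪ν, ·⟫ ≤ c` and in no other
closed half-space bounded by the hyperplane, and `C ∩ σ` has nonempty interior relative
to the hyperplane `σ = {⟪ν, ·⟫ = c}`. -/
def IsFacet {n : ℕ} (C : Set (EuclideanSpace ℝ (Fin n)))
    (p : EuclideanSpace ℝ (Fin n) × ℝ) : Prop :=
  ‖p.1‖ = 1 ∧ C ⊆ {x | ⟪p.1, x⟫_ℝ ≤ p.2} ∧ ¬ (C ⊆ {x | p.2 ≤ ⟪p.1, x⟫_ℝ}) ∧
    ∃ x ∈ hyperplaneOf p, ∃ ε > 0, Metric.ball x ε ∩ hyperplaneOf p ⊆ C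

/-- The interior of the closed facet `C ∩ σ` relative to the hyperplane `σ`
described by `p`. -/
def facetRelInterior {n : ℕ} (C : Set (EuclideanSpace ℝ (Fin n)))
    (p : EuclideanSpace ℝ (Fin n) × ℝ) : Set (EuclideanSpace ℝ (Fin n)) :=
  {x | x ∈ hyperplaneOf p ∧ ∃ ε > 0, Metric.ball x ε ∩ hyperplaneOf p ⊆ C}

/-!
A point in the relative interior of the facet with normal `p.1` lies on no other supporting
hyperplane of `C`: a second affine function `⟪q.1, ·⟫ - q.2` that is nonpositive on `C` and vanishes
at that point is nonpositive on a whole neighbourhood within the hyperplane of `p`, hence constant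
along `p.1ᗮ`, so `q` is a multiple of `p`, and an interior point of `C` fixes the sign. This gives
disjointness of the relative interiors, and it shows that every facet occurs among the finitely many
half-spaces describing `C`. Conversely, each member `p` of a *minimal* description is a facet: a
segment from an interior point of `C` to a point violating only the constraint `p` crosses the
hyperplane of `p` in the interior of the intersection of all the other half-spaces.
-/

section InnerProductSpace

open Set Filter Topology

variable {E : Type*} [NormedAddCommGroup E] [InnerProductSpace ℝ E]
  {C : Set E} {T : Finset (E × ℝ)} {p q : E × ℝ} {x : E}

/-- The closed half-space with outward normal vector `p.1` and offset `p.2`. If `p.1 = 0`, this is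
the whole space or empty. -/
def halfSpace (p : E × ℝ) : Set E :=
  {x | ⟪p.1, x⟫_ℝ ≤ p.2}

/-- The affine hyperplane bounding `halfSpace p`. It is the analogue of `hyperplaneOf` in an
arbitrary real inner product space. -/
def hyperplane (p : E × ℝ) : Set E :=
  {x | ⟪p.1, x⟫_ℝ = p.2}

/-- The interior of the closed facet `C ∩ hyperplane p` relative to `hyperplane p`. Relative
neighbourhoods are expressed through `𝓝[hyperplane p] x`, which avoids the subspace topology. -/
def facetInterior (C : Set E) (p : E × ℝ) : Set E :=
  {x | x ∈ hyperplane p ∧ C ∈ 𝓝[hyperplane p] x}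

/-- `p` describes a hyperplane facet of `C` with outward unit normal `p.1`, in an arbitrary real
inner product space. Normalizing `p.1` makes the description of a facet unique. -/
structure IsUnitFacet (C : Set E) (p : E × ℝ) : Prop where
  norm_eq_one : ‖p.1‖ = 1
  subset_halfSpace : C ⊆ halfSpace p
  not_subset_hyperplane : ¬ C ⊆ hyperplane p
  nonempty_facetInterior : (facetInterior C p).Nonempty

/-- An H-representation of the polyhedral set `C`: it is the intersection of the half-spaces
described by `T`, all given by unit normals. -/
structure IsUnitHRep (C : Set E) (T : Finset (E × ℝ)) : Prop where
  norm_eq_one : ∀ p ∈ T, ‖p.1‖ = 1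
  eq_biInter : C = ⋂ p ∈ T, halfSpace p

theorem isClosed_halfSpace (p : E × ℝ) : IsClosed (halfSpace p) :=
  isClosed_le (by fun_prop) continuous_const

theorem convex_halfSpace (p : E × ℝ) : Convex ℝ (halfSpace p) :=
  convex_halfSpace_le (innerSL ℝ p.1).toLinearMap.isLinear p.2

theorem hyperplane_subset_halfSpace (p : E × ℝ) : hyperplane p ⊆ halfSpace p :=
  fun _ hx => le_of_eq hx

theorem halfSpace_smul {r : ℝ} (hr : 0 < r) (p : E × ℝ) : halfSpace (r • p) = halfSpace p := by
  ext x
  simp [halfSpace, real_inner_smul_left, mul_le_mul_iff_right₀ hr]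

theorem interior_halfSpace_eq (hp : p.1 ≠ 0) :
    interior (halfSpace p) = {x | ⟪p.1, x⟫_ℝ < p.2} := by
  have hopen : IsOpenMap (innerSL ℝ p.1) :=
    (innerSL ℝ p.1).isOpenMap_of_ne_zero fun h =>
      hp (inner_self_eq_zero.mp (DFunLike.congr_fun h p.1))
  change interior (innerSL ℝ p.1 ⁻¹' Iic p.2) = innerSL ℝ p.1 ⁻¹' Iio p.2
  rw [← hopen.preimage_interior_eq_interior_preimage (innerSL ℝ p.1).continuous, interior_Iic]

theorem inner_lt_of_mem_interior (hp : p.1 ≠ 0) (hC : C ⊆ halfSpace p) (hx : x ∈ interior C) :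
    ⟪p.1, x⟫_ℝ < p.2 :=
  (interior_halfSpace_eq hp).subset (interior_mono hC hx)

theorem inner_nonpos_of_mem_facetInterior (hx : x ∈ facetInterior C p) (hq : C ⊆ halfSpace q)
    (hxq : x ∈ hyperplane q) {v : E} (hv : ⟪p.1, v⟫_ℝ = 0) : ⟪q.1, v⟫_ℝ ≤ 0 := by
  have hline : Tendsto (fun t : ℝ => x + t • v) (𝓝[>] 0) (𝓝[hyperplane p] x) := by
    refine tendsto_nhdsWithin_iff.mpr ⟨?_, Eventually.of_forall fun t => ?_⟩
    · exact (Continuous.tendsto' (by fun_prop) 0 x (by simp)).mono_left nhdsWithin_le_nhds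
    · simpa [hyperplane, inner_add_right, inner_smul_right, hv] using hx.1
  obtain ⟨t, htC, ht⟩ := ((hline.eventually hx.2).and self_mem_nhdsWithin).exists
  have hle : ⟪q.1, x⟫_ℝ + t * ⟪q.1, v⟫_ℝ ≤ q.2 := by
    simpa [halfSpace, inner_add_right, inner_smul_right] using hq htC
  have hxq : ⟪q.1, x⟫_ℝ = q.2 := hxq
  exact nonpos_of_mul_nonpos_right (by linarith) ht

theorem exists_eq_smul_of_mem_facetInterior (hx : x ∈ facetInterior C p) (hq : C ⊆ halfSpace q)
    (hxq : x ∈ hyperplane q) : ∃ c : ℝ, q = c • p := by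
  have hspan : q.1 ∈ ℝ ∙ p.1 := by
    rw [← (ℝ ∙ p.1).orthogonal_orthogonal, Submodule.mem_orthogonal']
    intro v hv
    rw [Submodule.mem_orthogonal_singleton_iff_inner_right] at hv
    have hneg : ⟪q.1, -v⟫_ℝ ≤ 0 :=
      inner_nonpos_of_mem_facetInterior hx hq hxq (by rw [inner_neg_right, hv, neg_zero])
    rw [inner_neg_right] at hneg
    exact (inner_nonpos_of_mem_facetInterior hx hq hxq hv).antisymm (by linarith)
  obtain ⟨c, hc⟩ := Submodule.mem_span_singleton.mp hspan
  refine ⟨c, Prod.ext hc.symm ?_⟩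
  calc q.2 = ⟪c • p.1, x⟫_ℝ := by rw [hc]; exact hxq.symm
    _ = c * p.2 := by rw [real_inner_smul_left, show ⟪p.1, x⟫_ℝ = p.2 from hx.1]

theorem eq_of_mem_facetInterior_of_mem_hyperplane (hCint : (interior C).Nonempty)
    (hp : ‖p.1‖ = 1) (hpC : C ⊆ halfSpace p) (hq : ‖q.1‖ = 1) (hqC : C ⊆ halfSpace q)
    (hx : x ∈ facetInterior C p) (hxq : x ∈ hyperplane q) : p = q := by
  obtain ⟨c, rfl⟩ := exists_eq_smul_of_mem_facetInterior hx hqC hxq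
  obtain ⟨z, hz⟩ := hCint
  have hzp : ⟪p.1, z⟫_ℝ < p.2 :=
    inner_lt_of_mem_interior (ne_zero_of_norm_ne_zero (hp ▸ one_ne_zero)) hpC hz
  have hzq : c * ⟪p.1, z⟫_ℝ < c * p.2 := by
    simpa [real_inner_smul_left] using
      inner_lt_of_mem_interior (ne_zero_of_norm_ne_zero (hq ▸ one_ne_zero)) hqC hz
  have hc_pos : 0 < c :=
    lt_of_not_ge fun hc => hzq.not_ge (mul_le_mul_of_nonpos_left hzp.le hc)
  have hc : c = 1 := by simpa [norm_smul, hp, abs_of_pos hc_pos] using hq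
  rw [hc, one_smul]

theorem pairwiseDisjoint_facetInterior (hCint : (interior C).Nonempty) :
    {p | IsUnitFacet C p}.PairwiseDisjoint (facetInterior C) := fun _ hp _ hq hne =>
  disjoint_left.mpr fun _ hxp hxq => hne <|
    eq_of_mem_facetInterior_of_mem_hyperplane hCint hp.norm_eq_one hp.subset_halfSpace
      hq.norm_eq_one hq.subset_halfSpace hxp hxq.1

theorem exists_isUnitHRep {S : Finset (E × ℝ)} (hS : ∀ p ∈ S, p.1 ≠ 0) :
    ∃ T, IsUnitHRep (⋂ p ∈ S, halfSpace p) T := by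
  classical
  refine ⟨S.image fun p => ‖p.1‖⁻¹ • p, ?_, ?_⟩
  · exact Finset.forall_mem_image.mpr fun p hp => norm_smul_inv_norm (𝕜 := ℝ) (hS p hp)
  · rw [Finset.set_biInter_finset_image]
    exact iInter₂_congr fun p hp =>
      (halfSpace_smul (inv_pos.mpr (norm_pos_iff.mpr (hS p hp))) p).symm

namespace IsUnitHRep

theorem ne_zero (hT : IsUnitHRep C T) (hp : p ∈ T) : p.1 ≠ 0 :=
  ne_zero_of_norm_ne_zero (hT.norm_eq_one p hp ▸ one_ne_zero)

theorem subset_halfSpace (hT : IsUnitHRep C T) (hp : p ∈ T) : C ⊆ halfSpace p :=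
  hT.eq_biInter.trans_subset (biInter_subset_of_mem hp)

theorem isClosed (hT : IsUnitHRep C T) : IsClosed C :=
  hT.eq_biInter ▸ isClosed_biInter fun p _ => isClosed_halfSpace p

theorem interior_eq (hT : IsUnitHRep C T) : interior C = ⋂ p ∈ T, {x | ⟪p.1, x⟫_ℝ < p.2} := by
  rw [hT.eq_biInter, Finset.interior_iInter]
  exact iInter₂_congr fun p hp => interior_halfSpace_eq (hT.ne_zero hp)

theorem frontier_eq (hT : IsUnitHRep C T) : frontier C = ⋃ p ∈ T, C ∩ hyperplane p := by
  rw [hT.isClosed.frontier_eq, hT.interior_eq]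
  ext x
  simp only [Set.mem_sdiff, mem_iInter, mem_iUnion, mem_inter_iff, not_forall, exists_prop]
  constructor
  · rintro ⟨hx, p, hp, hlt⟩
    exact ⟨p, hp, hx, (hT.subset_halfSpace hp hx).not_lt_iff_eq.mp hlt⟩
  · rintro ⟨p, hp, hx, hxp⟩
    exact ⟨hx, p, hp, hxp.not_lt⟩

theorem mem_of_isUnitFacet (hT : IsUnitHRep C T) (hCint : (interior C).Nonempty)
    (hp : IsUnitFacet C p) : p ∈ T := by
  obtain ⟨x, hx⟩ := hp.nonempty_facetInterior
  have hp0 : p.1 ≠ 0 := ne_zero_of_norm_ne_zero (hp.norm_eq_one ▸ one_ne_zero)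
  have hxfr : x ∈ frontier C := by
    rw [hT.isClosed.frontier_eq]
    exact ⟨mem_of_mem_nhdsWithin hx.1 hx.2, fun hxi =>
      (inner_lt_of_mem_interior hp0 hp.subset_halfSpace hxi).ne hx.1⟩
  rw [hT.frontier_eq] at hxfr
  obtain ⟨q, hq, -, hxq⟩ := mem_iUnion₂.mp hxfr
  have hpq : p = q := eq_of_mem_facetInterior_of_mem_hyperplane hCint hp.norm_eq_one
    hp.subset_halfSpace (hT.norm_eq_one q hq) (hT.subset_halfSpace hq) hx hxq
  rwa [hpq]

end IsUnitHRep

theorem exists_mem_openSegment_inter_hyperplane {y z : E} (hy : ⟪p.1, y⟫_ℝ < p.2)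
    (hz : p.2 < ⟪p.1, z⟫_ℝ) : (openSegment ℝ y z ∩ hyperplane p).Nonempty := by
  have himage : innerSL ℝ p.1 '' openSegment ℝ y z = Ioo ⟪p.1, y⟫_ℝ ⟪p.1, z⟫_ℝ :=
    (image_openSegment ℝ (innerSL ℝ p.1).toLinearMap.toAffineMap y z).trans
      (openSegment_eq_Ioo (hy.trans hz))
  obtain ⟨w, hw, hwp⟩ := himage.ge ⟨hy, hz⟩
  exact ⟨w, hw, hwp⟩

theorem nonempty_facetInterior_inter_halfSpace {D : Set E} (hD : Convex ℝ D)
    (hint : (interior D ∩ {x | ⟪p.1, x⟫_ℝ < p.2}).Nonempty) (hDp : ¬ D ⊆ halfSpace p) :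
    (facetInterior (D ∩ halfSpace p) p).Nonempty := by
  obtain ⟨y, hyD, hyp⟩ := hint
  obtain ⟨z, hzD, hzp⟩ := not_subset.mp hDp
  obtain ⟨w, hw, hwp⟩ := exists_mem_openSegment_inter_hyperplane hyp (not_le.mp hzp)
  have hwD : w ∈ interior D := hD.openSegment_interior_self_subset_interior hyD hzD hw
  exact ⟨w, hwp, inter_mem (mem_nhdsWithin_of_mem_nhds (mem_interior_iff_mem_nhds.mp hwD))
    (mem_of_superset self_mem_nhdsWithin (hyperplane_subset_halfSpace p))⟩

theorem isUnitFacet_of_mem_of_minimal (hT : Minimal (IsUnitHRep C) T)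
    (hCint : (interior C).Nonempty) (hp : p ∈ T) : IsUnitFacet C p := by
  classical
  obtain ⟨y, hy⟩ := hCint
  have hyp : ⟪p.1, y⟫_ℝ < p.2 :=
    inner_lt_of_mem_interior (hT.prop.ne_zero hp) (hT.prop.subset_halfSpace hp) hy
  set D : Set E := ⋂ q ∈ T.erase p, halfSpace q
  have hCD : C = D ∩ halfSpace p := by
    rw [hT.prop.eq_biInter, ← Finset.insert_erase hp, Finset.set_biInter_insert, inter_comm]
  have hDp : ¬ D ⊆ halfSpace p := fun h =>
    hT.not_prop_of_lt (Finset.erase_ssubset hp)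
      ⟨fun q hq => hT.prop.norm_eq_one q (Finset.mem_of_mem_erase hq),
        hCD.trans (inter_eq_left.mpr h)⟩
  refine ⟨hT.prop.norm_eq_one p hp, hT.prop.subset_halfSpace hp,
    fun h => hyp.ne (h (interior_subset hy)), ?_⟩
  have hDconv : Convex ℝ D := convex_iInter₂ fun q _ => convex_halfSpace q
  rw [hCD] at hy ⊢
  exact nonempty_facetInterior_inter_halfSpace hDconv
    ⟨y, interior_mono inter_subset_left hy, hyp⟩ hDp

theorem isUnitFacet_iff_mem_of_minimal (hT : Minimal (IsUnitHRep C) T)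
    (hCint : (interior C).Nonempty) : IsUnitFacet C p ↔ p ∈ T :=
  ⟨hT.prop.mem_of_isUnitFacet hCint, isUnitFacet_of_mem_of_minimal hT hCint⟩

theorem facets_of_compact_polyhedral_general {S : Finset (E × ℝ)} (hS : ∀ p ∈ S, p.1 ≠ 0)
    (hC : C = ⋂ p ∈ S, halfSpace p) (hCint : (interior C).Nonempty) :
    {p | IsUnitFacet C p}.Finite ∧
    (frontier C = ⋃ p ∈ {p | IsUnitFacet C p}, C ∩ hyperplane p) ∧
    {p | IsUnitFacet C p}.PairwiseDisjoint (facetInterior C) := by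
  obtain ⟨T, hT⟩ := exists_minimal_of_wellFoundedLT (IsUnitHRep C) (hC ▸ exists_isUnitHRep hS)
  have hfacets : {p | IsUnitFacet C p} = T :=
    ext fun _ => isUnitFacet_iff_mem_of_minimal hT hCint
  refine ⟨hfacets ▸ T.finite_toSet, ?_, pairwiseDisjoint_facetInterior hCint⟩
  rw [hfacets]
  exact hT.prop.frontier_eq

end InnerProductSpace

theorem facetRelInterior_eq_facetInterior {n : ℕ} (C : Set (EuclideanSpace ℝ (Fin n)))
    (p : EuclideanSpace ℝ (Fin n) × ℝ) : facetRelInterior C p = facetInterior C p :=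
  Set.ext fun _ => and_congr_right fun _ => Metric.mem_nhdsWithin_iff.symm

theorem isFacet_iff_isUnitFacet {n : ℕ} {C : Set (EuclideanSpace ℝ (Fin n))}
    {p : EuclideanSpace ℝ (Fin n) × ℝ} : IsFacet C p ↔ IsUnitFacet C p := by
  have hne : (facetRelInterior C p).Nonempty ↔ (facetInterior C p).Nonempty := by
    rw [facetRelInterior_eq_facetInterior]
  constructor
  · rintro ⟨hp, hC, hC', hx⟩
    exact ⟨hp, hC, fun h => hC' fun x hx => (h hx).ge, hne.mp hx⟩
  · rintro ⟨hp, hC, hC', hx⟩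
    exact ⟨hp, hC, fun h => hC' fun x hx => (hC hx).antisymm (h hx), hne.mpr hx⟩

/-- For a compact convex polyhedral set `C` with nonempty interior:
(i) `C` has only finitely many hyperplane facets;
(ii) the topological boundary of `C` is the union of its closed facets;
(iii) the relative interiors of distinct facets are disjoint. -/
theorem facets_of_compact_polyhedral {n : ℕ} (hn : 1 ≤ n)
    (C : Set (EuclideanSpace ℝ (Fin n)))
    (hCcompact : IsCompact C) (hCconv : Convex ℝ C) (hCpoly : IsPolyhedral C)
    (hCint : (interior C).Nonempty) :
    {p : EuclideanSpace ℝ (Fin n) × ℝ | IsFacet C p}.Finite ∧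
    (frontier C = ⋃ p ∈ {p : EuclideanSpace ℝ (Fin n) × ℝ | IsFacet C p}, C ∩ hyperplaneOf p) ∧
    (∀ p₁ p₂ : EuclideanSpace ℝ (Fin n) × ℝ, IsFacet C p₁ → IsFacet C p₂ →
      hyperplaneOf p₁ ≠ hyperplaneOf p₂ →
      Disjoint (facetRelInterior C p₁) (facetRelInterior C p₂)) := by
  obtain ⟨S, hS, hC⟩ := hCpoly
  obtain ⟨hfin, hfrontier, hdisj⟩ := facets_of_compact_polyhedral_general hS hC hCint
  simp only [isFacet_iff_isUnitFacet, facetRelInterior_eq_facetInterior]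
  exact ⟨hfin, hfrontier, fun _ _ h₁ h₂ hne => hdisj h₁ h₂ (ne_of_apply_ne hyperplaneOf hne)⟩
end
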